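/- arXiv:1107.1639 — 5 statements merged into one kernel-verified Lean document; each statement's English description precedes it below -/
import Mathlib

section
/- The left A-module E' is 0-injective if and only if it is an injective A-module. Equivalently: over the Noetherian ring A, the left A-module E' is injective if and only if for every exact sequence A^{1×k_1} →(•P_1) A^{1×k_2} →(•P_2) A^{1×k_3} of right A-modules, where P_1 ∈ A^{k_1×k_2} and P_2 ∈ A^{k_2×k_3}, the sequence (E')^{k_3} →(P_2•) (E')^{k_2} →(P_1•) (E')^{k_1} obtained by applying Hom_A(−, E') is exact. -/
/-- Right multiplication `x ↦ x P` by the matrix `P ∈ A^{q×r}` on row vectors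
`x ∈ A^{1×q}`: `(x P) j = ∑ i, x i * P i j`. -/
def rmulA {A : Type*} [Ring A] {q r : ℕ} (P : Matrix (Fin q) (Fin r) A) :
    (Fin q → A) → (Fin r → A) :=
  fun x j => ∑ i, x i * P i j

/-- Right multiplication `x ↦ x P` by the matrix `P ∈ A^{q×r}` on row vectors
`x ∈ E^{1×q}` with entries in a right `A`-module `E` (the right action of `A` on `E`
being encoded as a left `Aᵐᵒᵖ`-action): `(x P) j = ∑ i, x i • P i j`. -/
def rmulE {A E : Type*} [Ring A] [AddCommGroup E] [Module Aᵐᵒᵖ E] {q r : ℕ}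
    (P : Matrix (Fin q) (Fin r) A) : (Fin q → E) → (Fin r → E) :=
  fun x j => ∑ i, MulOpposite.op (P i j) • x i

/-- Left multiplication `x' ↦ P x'` by the matrix `P ∈ A^{q×r}` on column vectors
`x' ∈ (E')^r` with entries in a left `A`-module `E'`: `(P x') i = ∑ j, P i j • x' j`. -/
def lmulE' {A E' : Type*} [Ring A] [AddCommGroup E'] [Module A E'] {q r : ℕ}
    (P : Matrix (Fin q) (Fin r) A) : (Fin r → E') → (Fin q → E') :=
  fun x' i => ∑ j, P i j • x' j

/-- The weak topology on `X` determined by a pairing `B : X → Y → 𝕜`,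
i.e. the coarsest topology making every map `x ↦ B x y` (`y ∈ Y`) continuous. -/
noncomputable def weakTopology {𝕜 X Y : Type*} [TopologicalSpace 𝕜]
    (B : X → Y → 𝕜) : TopologicalSpace X :=
  TopologicalSpace.induced B Pi.topologicalSpace

/-- Flatness of the right `A`-module `E` (`A` not necessarily commutative), expressed
by the standard equational criterion: every relation `∑ i, x i • a i = 0` in `E`
comes from relations in `A`. -/
def RightFlat (A E : Type*) [Ring A] [AddCommGroup E] [Module Aᵐᵒᵖ E] : Prop :=
  ∀ (q : ℕ) (a : Fin q → A) (x : Fin q → E),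
    ∑ i, MulOpposite.op (a i) • x i = 0 →
    ∃ (r : ℕ) (y : Fin r → E) (Q : Matrix (Fin r) (Fin q) A),
      (∀ j, ∑ i, Q j i * a i = 0) ∧ ∀ i, x i = ∑ j, MulOpposite.op (Q j i) • y j

/-- `rmulA P` as a left `A`-linear map. -/
def rmulL {A : Type*} [Ring A] {q r : ℕ} (P : Matrix (Fin q) (Fin r) A) :
    (Fin q → A) →ₗ[A] (Fin r → A) where
  toFun := rmulA P
  map_add' x y := by
    funext j; simp [rmulA, add_mul, Finset.sum_add_distrib]
  map_smul' c x := by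
    funext j; simp [rmulA, mul_assoc, Finset.mul_sum]

/-- The pairing with a column vector. -/
def pairL {A E : Type*} [Ring A] [AddCommGroup E] [Module A E] {q : ℕ} (y : Fin q → E) :
    (Fin q → A) →ₗ[A] E where
  toFun x := ∑ i, x i • y i
  map_add' x z := by simp [add_smul, Finset.sum_add_distrib]
  map_smul' c x := by simp [mul_smul, Finset.smul_sum]

theorem pairL_single {A E : Type*} [Ring A] [AddCommGroup E] [Module A E] {q : ℕ}
    (y : Fin q → E) (i : Fin q) : pairL (A := A) y (Pi.single i 1) = y i := by
  simp [pairL, Pi.single_apply, ite_smul]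

theorem pairL_lmul {A E : Type*} [Ring A] [AddCommGroup E] [Module A E] {q r : ℕ}
    (P : Matrix (Fin q) (Fin r) A) (y : Fin r → E) (x : Fin q → A) :
    pairL (lmulE' P y) x = pairL y (rmulL P x) := by
  simp only [pairL, lmulE', rmulL, rmulA, LinearMap.coe_mk, AddHom.coe_mk, Finset.smul_sum,
    Finset.sum_smul, mul_smul]
  exact Finset.sum_comm

theorem pairL_surj {A E : Type*} [Ring A] [AddCommGroup E] [Module A E] {q : ℕ}
    (f : (Fin q → A) →ₗ[A] E) : pairL (fun i => f (Pi.single i 1)) = f := by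
  refine LinearMap.pi_ext' fun i => LinearMap.ext_ring ?_
  simpa using pairL_single (A := A) (fun i => f (Pi.single i 1)) i

theorem pairL_inj {A E : Type*} [Ring A] [AddCommGroup E] [Module A E] {q : ℕ}
    {y z : Fin q → E} (h : pairL (A := A) y = pairL z) : y = z := by
  funext i
  rw [← pairL_single (A := A) y i, h, pairL_single]

/-- Over the Noetherian ring `A`, the left `A`-module `E'` is injective if and only if
it is `0`-injective, i.e. for every exact sequence
`A^{1×k₁} →(•P₁) A^{1×k₂} →(•P₂) A^{1×k₃}`, the sequence
`(E')^{k₃} →(P₂•) (E')^{k₂} →(P₁•) (E')^{k₁}` obtained by applying `Hom_A(-, E')`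
is exact. -/
theorem injective_iff_zeroInjective
    {𝕜 : Type} [RCLike 𝕜] {A : Type} [Ring A] [IsDomain A] [Algebra 𝕜 A]
    [IsNoetherianRing A] [IsNoetherianRing Aᵐᵒᵖ]
    (E' : Type) [AddCommGroup E'] [Module 𝕜 E']
    [Module A E'] [IsScalarTower 𝕜 A E'] [SMulCommClass 𝕜 A E']
    :
    Module.Injective A E' ↔
      ∀ (k₁ k₂ k₃ : ℕ) (P₁ : Matrix (Fin k₁) (Fin k₂) A) (P₂ : Matrix (Fin k₂) (Fin k₃) A),
        Function.Exact (rmulA P₁) (rmulA P₂) →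
        Function.Exact (lmulE' (E' := E') P₂) (lmulE' (E' := E') P₁) := by
  constructor
  · intro hE k₁ k₂ k₃ P₁ P₂ hex y
    have hex' : ∀ x, rmulL P₂ x = 0 ↔ x ∈ Set.range (rmulL P₁) := hex
    constructor
    · intro hy
      have hk : LinearMap.ker (rmulL P₂) ≤ LinearMap.ker (pairL (A := A) y) := by
        intro x hx
        obtain ⟨w, rfl⟩ := (hex' x).1 hx
        rw [LinearMap.mem_ker, ← pairL_lmul, hy]
        simp [pairL]
      obtain ⟨h, hh⟩ := hE.out ((LinearMap.ker (rmulL P₂)).liftQ (rmulL P₂) le_rfl)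
        (LinearMap.ker_eq_bot.1 (Submodule.ker_liftQ_eq_bot _ _ _ le_rfl))
        ((LinearMap.ker (rmulL P₂)).liftQ (pairL (A := A) y) hk)
      refine ⟨fun i => h (Pi.single i 1), pairL_inj (A := A) ?_⟩
      refine LinearMap.ext fun x => ?_
      rw [pairL_lmul, pairL_surj]
      simpa using hh (Submodule.Quotient.mk x)
    · rintro ⟨z, rfl⟩
      refine pairL_inj (A := A) ?_
      refine LinearMap.ext fun x => ?_
      rw [pairL_lmul, pairL_lmul, (hex' _).2 ⟨x, rfl⟩]
      simp [pairL]
  · intro H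
    apply Module.Baer.injective
    intro I g
    obtain ⟨n, a, ha⟩ := Submodule.fg_iff_exists_fin_generating_family.1
      (IsNoetherian.noetherian I)
    have hmem : ∀ i, a i ∈ I := fun i => ha ▸ Submodule.subset_span ⟨i, rfl⟩
    let P₂ : Matrix (Fin n) (Fin 1) A := fun i _ => a i
    obtain ⟨m, b, hb⟩ := Submodule.fg_iff_exists_fin_generating_family.1
      (IsNoetherian.noetherian (LinearMap.ker (rmulL P₂)))
    let P₁ : Matrix (Fin m) (Fin n) A := b
    have hP₁ : ∀ x, rmulL P₁ x = ∑ i, x i • b i := by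
      intro x
      funext j
      simp [rmulL, rmulA, P₁]
    have hex : Function.Exact (rmulA P₁) (rmulA P₂) := by
      intro x
      change x ∈ LinearMap.ker (rmulL P₂) ↔ x ∈ Set.range (rmulL P₁)
      rw [← hb, Submodule.mem_span_range_iff_exists_fun]
      simp [hP₁]
    let y : Fin n → E' := fun i => g ⟨a i, hmem i⟩
    have hg : ∀ x : Fin n → A, ∀ h : ∑ i, x i * a i ∈ I,
        g ⟨∑ i, x i * a i, h⟩ = pairL y x := by
      intro x h
      have : (⟨∑ i, x i * a i, h⟩ : I) = ∑ i, x i • ⟨a i, hmem i⟩ := by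
        apply Subtype.ext
        simp
      rw [this, map_sum]
      simp only [map_smul]
      rfl
    have hy : lmulE' P₁ y = 0 := by
      funext i
      have hbi : b i ∈ LinearMap.ker (rmulL P₂) := hb ▸ Submodule.subset_span ⟨i, rfl⟩
      have h0 : ∑ j, b i j * a j = 0 := congrFun (LinearMap.mem_ker.1 hbi) 0
      change pairL y (b i) = 0
      rw [← hg (b i) (by rw [h0]; exact I.zero_mem)]
      simp only [h0]
      exact map_zero g
    obtain ⟨z, hz⟩ := (H m n 1 P₁ P₂ hex y).1 hy
    refine ⟨LinearMap.toSpanSingleton A E' (z 0), ?_⟩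
    intro x hx
    have hx' := hx
    rw [← ha, Submodule.mem_span_range_iff_exists_fun] at hx'
    obtain ⟨c, rfl⟩ := hx'
    simp only [smul_eq_mul] at hx ⊢
    rw [hg c hx, ← hz, pairL_lmul]
    simp [pairL, rmulL, rmulA, P₂, Finset.sum_smul]
end

section
/- Let P_1 ∈ A^{k_1×k_2} and P_2 ∈ A^{k_2×k_3}. If the sequence E^{1×k_1} →(•P_1) E^{1×k_2} →(•P_2) E^{1×k_3} is exact (i.e., im_E(•P_1) = ker_E(•P_2)), then the σ((E')^{k_2}, E^{1×k_2})-closure of the image of P_2• : (E')^{k_3} → (E')^{k_2} equals the kernel of P_1• : (E')^{k_2} → (E')^{k_1}. -/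
/-- The weak topology `σ(E^{1×k}, (E')^k)` on `E^{1×k}` determined by the componentwise
extension `⟨x, x'⟩ = ∑ i, ⟨x i, x' i⟩` of the duality bracket `B` to `E^{1×k} × (E')^k`. -/
noncomputable def sigmaRow {𝕜 E E' : Type*} [RCLike 𝕜] [AddCommGroup E] [Module 𝕜 E]
    [AddCommGroup E'] [Module 𝕜 E'] (B : E →ₗ[𝕜] E' →ₗ[𝕜] 𝕜) (k : ℕ) :
    TopologicalSpace (Fin k → E) :=
  weakTopology fun (x : Fin k → E) (x' : Fin k → E') => ∑ i, B (x i) (x' i)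

/-- The weak topology `σ((E')^k, E^{1×k})` on `(E')^k` determined by the componentwise
extension `⟨x, x'⟩ = ∑ i, ⟨x i, x' i⟩` of the duality bracket `B` to `E^{1×k} × (E')^k`. -/
noncomputable def sigmaCol {𝕜 E E' : Type*} [RCLike 𝕜] [AddCommGroup E] [Module 𝕜 E]
    [AddCommGroup E'] [Module 𝕜 E'] (B : E →ₗ[𝕜] E' →ₗ[𝕜] 𝕜) (k : ℕ) :
    TopologicalSpace (Fin k → E') :=
  weakTopology fun (x' : Fin k → E') (x : Fin k → E) => ∑ i, B (x i) (x' i)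

lemma bracket_adj
    {𝕜 : Type} [RCLike 𝕜] {A : Type} [Ring A]
    {E E' : Type} [AddCommGroup E] [Module 𝕜 E] [AddCommGroup E'] [Module 𝕜 E']
    [Module A E'] [Module Aᵐᵒᵖ E]
    (B : E →ₗ[𝕜] E' →ₗ[𝕜] 𝕜)
    (hcomp : ∀ (x : E) (a : A) (x' : E'), B (MulOpposite.op a • x) x' = B x (a • x'))
    {q r : ℕ} (P : Matrix (Fin q) (Fin r) A) (x : Fin q → E) (x' : Fin r → E') :
    ∑ j, B (rmulE P x j) (x' j) = ∑ i, B (x i) (lmulE' P x' i) := by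
  simp only [rmulE, lmulE', map_sum, LinearMap.sum_apply, hcomp]
  exact Finset.sum_comm

/-- If `E^{1×k₁} →(•P₁) E^{1×k₂} →(•P₂) E^{1×k₃}` is exact, then the
`σ((E')^{k₂}, E^{1×k₂})`-closure of `im_{E'}(P₂•)` equals `ker_{E'}(P₁•)`. -/
theorem closure_image_eq_ker_of_exact
    {𝕜 : Type} [RCLike 𝕜] {A : Type} [Ring A] [IsDomain A] [Algebra 𝕜 A]
    [IsNoetherianRing A] [IsNoetherianRing Aᵐᵒᵖ]
    {E E' : Type} [AddCommGroup E] [Module 𝕜 E] [AddCommGroup E'] [Module 𝕜 E']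
    [Module A E'] [IsScalarTower 𝕜 A E'] [SMulCommClass 𝕜 A E']
    [Module Aᵐᵒᵖ E] [IsScalarTower 𝕜 Aᵐᵒᵖ E] [SMulCommClass 𝕜 Aᵐᵒᵖ E]
    (B : E →ₗ[𝕜] E' →ₗ[𝕜] 𝕜)
    (hB₁ : ∀ x : E, (∀ x' : E', B x x' = 0) → x = 0)
    (hB₂ : ∀ x' : E', (∀ x : E, B x x' = 0) → x' = 0)
    (hsemi : ∀ a : A, @Continuous E' E' (weakTopology fun x' x => B x x')
      (weakTopology fun x' x => B x x') (fun x' => a • x'))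
    (hcomp : ∀ (x : E) (a : A) (x' : E'), B (MulOpposite.op a • x) x' = B x (a • x'))
    (k₁ k₂ k₃ : ℕ) (P₁ : Matrix (Fin k₁) (Fin k₂) A) (P₂ : Matrix (Fin k₂) (Fin k₃) A)
    (hexact : Function.Exact (rmulE (E := E) P₁) (rmulE (E := E) P₂)) :
    @closure _ (sigmaCol B k₂) (Set.range (lmulE' (E' := E') P₂)) =
      {x' : Fin k₂ → E' | lmulE' P₁ x' = 0} := by
  classical
  have hadj := @bracket_adj 𝕜 _ A _ E E' _ _ _ _ _ _ B hcomp
  have sep₁ : ∀ {k : ℕ} (x : Fin k → E), (∀ x' : Fin k → E', ∑ i, B (x i) (x' i) = 0) → x = 0 := by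
    intro k x h
    funext i
    apply hB₁
    intro z
    have := h (Pi.single i z)
    rw [Finset.sum_eq_single i] at this
    · simpa using this
    · intro b _ hb
      simp [Pi.single_eq_of_ne hb]
    · simp
  have sep₂ : ∀ {k : ℕ} (x' : Fin k → E'), (∀ x : Fin k → E, ∑ i, B (x i) (x' i) = 0) → x' = 0 := by
    intro k x' h
    funext i
    apply hB₂
    intro z
    have := h (Pi.single i z)
    rw [Finset.sum_eq_single i] at this
    · simpa using this
    · intro b _ hb
      simp [Pi.single_eq_of_ne hb]
    · simp
  ext x'
  rw [Set.mem_setOf_eq]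
  unfold sigmaCol weakTopology
  rw [closure_induced]
  constructor
  · intro hx
    apply sep₂
    intro u
    rw [← hadj]
    have hcl : IsClosed {φ : (Fin k₂ → E) → 𝕜 | φ (rmulE P₁ u) = 0} :=
      isClosed_eq (continuous_apply _) continuous_const
    refine closure_minimal ?_ hcl hx
    rintro _ ⟨_, ⟨w, rfl⟩, rfl⟩
    have h0 : rmulE P₂ (rmulE P₁ u) = 0 := (hexact _).2 ⟨u, rfl⟩
    change ∑ i, B (rmulE P₁ u i) (lmulE' P₂ w i) = 0
    rw [← hadj, h0]
    simp
  · intro hx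
    rw [mem_closure_iff]
    intro o ho hxo
    obtain ⟨I, U, hU, hsub⟩ := isOpen_pi_iff.1 ho _ hxo
    let C : (Fin k₂ → E) → ((Fin k₂ → E') →ₗ[𝕜] 𝕜) :=
      fun y => ∑ i, (B (y i)).comp (LinearMap.proj i)
    have hC : ∀ y z, C y z = ∑ i, B (y i) (z i) := by
      intro y z
      simp [C, LinearMap.sum_apply]
    let L : (Fin k₂ → E') →ₗ[𝕜] (I → 𝕜) := LinearMap.pi fun y => C y.1
    let M : (Fin k₃ → E') →ₗ[𝕜] (Fin k₂ → E') :=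
      { toFun := lmulE' P₂
        map_add' := by
          intro a b
          funext i
          simp [lmulE', Finset.sum_add_distrib]
        map_smul' := by
          intro c a
          funext i
          simp only [lmulE', Pi.smul_apply, RingHom.id_apply, Finset.smul_sum]
          exact Finset.sum_congr rfl fun j _ => (smul_comm c (P₂ i j) (a j)).symm }
    have key : L x' ∈ LinearMap.range (L.comp M) := by
      by_contra hn
      obtain ⟨f, hf, hle⟩ := Submodule.exists_le_ker_of_notMem hn
      let y : Fin k₂ → E := ∑ i : I, f (Pi.single i 1) • i.1
      have hy : ∀ z, ∑ i, B (y i) (z i) = f (L z) := by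
        intro z
        rw [LinearMap.pi_apply_eq_sum_univ f (L z)]
        simp only [y, Finset.sum_apply, Pi.smul_apply, map_sum, LinearMap.sum_apply,
          map_smul, LinearMap.smul_apply]
        rw [Finset.sum_comm]
        refine Finset.sum_congr rfl fun j _ => ?_
        have : L z j = ∑ i, B (j.1 i) (z i) := hC _ _
        rw [this, ← Finset.smul_sum, smul_eq_mul, smul_eq_mul, mul_comm]
        congr 2
        ext t
        simp [Pi.single_apply, eq_comm]
      have hy0 : rmulE P₂ y = 0 := by
        apply sep₁
        intro w
        rw [hadj, hy]
        exact hle ⟨w, rfl⟩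
      obtain ⟨u, hu⟩ := (hexact _).1 hy0
      apply hf
      rw [← hy, ← hu, hadj, hx]
      simp
    obtain ⟨w, hw⟩ := key
    refine ⟨_, hsub ?_, ⟨_, ⟨w, rfl⟩, rfl⟩⟩
    intro y hyI
    have h1 : C y (lmulE' P₂ w) = C y x' := congrFun hw ⟨y, hyI⟩
    rw [hC, hC] at h1
    have h2 := (hU y hyI).2
    change ∑ i, B (y i) (lmulE' P₂ w i) ∈ U y
    rw [h1]
    exact h2
end

section
/- Let P_1 ∈ A^{k_1×k_2} and P_2 ∈ A^{k_2×k_3}. If the sequence (E')^{k_3} →(P_2•) (E')^{k_2} →(P_1•) (E')^{k_1} is exact (i.e., im_{E'}(P_2•) = ker_{E'}(P_1•)), then the σ(E^{1×k_2}, (E')^{k_2})-closure of the image of •P_1 : E^{1×k_1} → E^{1×k_2} equals the kernel of •P_2 : E^{1×k_2} → E^{1×k_3}. -/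
theorem mem_closure_weak {𝕜 X Y : Type*} [RCLike 𝕜] [AddCommGroup X] [Module 𝕜 X]
    [AddCommGroup Y] [Module 𝕜 Y] (B : X →ₗ[𝕜] Y →ₗ[𝕜] 𝕜) (M : Submodule 𝕜 X) (x : X) :
    x ∈ @closure _ (weakTopology fun x y => B x y) (M : Set X) ↔
      ∀ y, (∀ m ∈ M, B m y = 0) → B x y = 0 := by
  classical
  unfold weakTopology
  constructor
  · intro hx y hy
    rw [closure_induced] at hx
    have hc : IsClosed {f : Y → 𝕜 | f y = 0} :=
      isClosed_singleton.preimage (continuous_apply y)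
    have := closure_minimal (s := (fun x y => B x y) '' (M : Set X)) (by
      rintro _ ⟨m, hm, rfl⟩
      exact hy m hm) hc hx
    exact this
  · intro h
    rw [closure_induced, mem_closure_iff]
    intro o ho hxo
    rw [isOpen_pi_iff] at ho
    obtain ⟨I, u, hu, hI⟩ := ho _ hxo
    let T : X →ₗ[𝕜] (I → 𝕜) := LinearMap.pi fun i => B.flip (i : Y)
    have hT : T x ∈ M.map T := by
      by_contra hn
      obtain ⟨f, hf, hle⟩ := Submodule.exists_le_ker_of_notMem hn
      have key : ∀ v, f (T v) = B v (∑ i : I, f (Pi.single i 1) • (i : Y)) := by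
        intro v
        rw [LinearMap.pi_apply_eq_sum_univ f (T v), map_sum]
        refine Finset.sum_congr rfl fun i _ => ?_
        rw [map_smul, smul_eq_mul, smul_eq_mul, mul_comm]
        congr 2
        congr 1
        ext j
        simp [Pi.single_apply, eq_comm]
      apply hf
      rw [key]
      apply h
      intro m hm
      rw [← key]
      exact hle (Submodule.mem_map_of_mem hm)
    obtain ⟨m, hm, hmx⟩ := hT
    refine ⟨fun y => B m y, hI ?_, ⟨m, hm, rfl⟩⟩
    intro i hi
    have := congrFun hmx ⟨i, hi⟩
    have h2 : B m i = B x i := this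
    simp only [h2]
    exact (hu i hi).2

/-- If `(E')^{k₃} →(P₂•) (E')^{k₂} →(P₁•) (E')^{k₁}` is exact, then the
`σ(E^{1×k₂}, (E')^{k₂})`-closure of `im_E(•P₁)` equals `ker_E(•P₂)`. -/
theorem closure_image_eq_ker_of_exact_dual
    {𝕜 : Type} [RCLike 𝕜] {A : Type} [Ring A] [IsDomain A] [Algebra 𝕜 A]
    [IsNoetherianRing A] [IsNoetherianRing Aᵐᵒᵖ]
    {E E' : Type} [AddCommGroup E] [Module 𝕜 E] [AddCommGroup E'] [Module 𝕜 E']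
    [Module A E'] [IsScalarTower 𝕜 A E'] [SMulCommClass 𝕜 A E']
    [Module Aᵐᵒᵖ E] [IsScalarTower 𝕜 Aᵐᵒᵖ E] [SMulCommClass 𝕜 Aᵐᵒᵖ E]
    (B : E →ₗ[𝕜] E' →ₗ[𝕜] 𝕜)
    (hB₁ : ∀ x : E, (∀ x' : E', B x x' = 0) → x = 0)
    (hB₂ : ∀ x' : E', (∀ x : E, B x x' = 0) → x' = 0)
    (hsemi : ∀ a : A, @Continuous E' E' (weakTopology fun x' x => B x x')
      (weakTopology fun x' x => B x x') (fun x' => a • x'))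
    (hcomp : ∀ (x : E) (a : A) (x' : E'), B (MulOpposite.op a • x) x' = B x (a • x'))
    (k₁ k₂ k₃ : ℕ) (P₁ : Matrix (Fin k₁) (Fin k₂) A) (P₂ : Matrix (Fin k₂) (Fin k₃) A)
    (hexact : Function.Exact (lmulE' (E' := E') P₂) (lmulE' (E' := E') P₁)) :
    @closure _ (sigmaRow B k₂) (Set.range (rmulE (E := E) P₁)) =
      {x : Fin k₂ → E | rmulE P₂ x = 0} := by
  have adj : ∀ {q r : ℕ} (P : Matrix (Fin q) (Fin r) A) (x : Fin q → E) (y : Fin r → E'),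
      ∑ j, B (rmulE P x j) (y j) = ∑ i, B (x i) (lmulE' P y i) := by
    intro q r P x y
    simp only [rmulE, lmulE', map_sum, LinearMap.sum_apply, hcomp]
    exact Finset.sum_comm
  let BB : (Fin k₂ → E) →ₗ[𝕜] (Fin k₂ → E') →ₗ[𝕜] 𝕜 :=
    ∑ i, (B.comp (LinearMap.proj i)).compl₂ (LinearMap.proj i)
  have hBB : ∀ x y, BB x y = ∑ i, B (x i) (y i) := by
    intro x y
    simp [BB, LinearMap.sum_apply]
  let M : Submodule 𝕜 (Fin k₂ → E) :=
    { carrier := Set.range (rmulE (E := E) P₁)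
      add_mem' := by
        rintro _ _ ⟨a, rfl⟩ ⟨b, rfl⟩
        refine ⟨a + b, ?_⟩
        ext j
        simp [rmulE, Finset.sum_add_distrib]
      zero_mem' := ⟨0, by ext j; simp [rmulE]⟩
      smul_mem' := by
        rintro c _ ⟨a, rfl⟩
        refine ⟨c • a, ?_⟩
        ext j
        simp [rmulE, Finset.smul_sum, smul_comm c] }
  have htop : sigmaRow B k₂ = weakTopology fun x y => BB x y := by
    unfold sigmaRow
    simp only [hBB]
  have hl : ∀ {k : ℕ} (x : Fin k → E), (∀ y : Fin k → E', ∑ i, B (x i) (y i) = 0) → x = 0 := by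
    intro k x hx
    ext i
    refine hB₁ _ fun x' => ?_
    have := hx (Pi.single i x')
    rw [Finset.sum_eq_single i] at this
    · simpa using this
    · intro j _ hj
      simp [hj]
    · simp
  have hr : ∀ {k : ℕ} (y : Fin k → E'), (∀ x : Fin k → E, ∑ i, B (x i) (y i) = 0) → y = 0 := by
    intro k y hy
    ext i
    refine hB₂ _ fun x => ?_
    have := hy (Pi.single i x)
    rw [Finset.sum_eq_single i] at this
    · simpa using this
    · intro j _ hj
      simp [hj]
    · simp
  ext x
  rw [htop]
  refine (mem_closure_weak BB M x).trans ?_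
  simp only [Set.mem_setOf_eq, hBB]
  constructor
  · intro h
    refine hl _ fun z => ?_
    rw [adj]
    apply h
    rintro _ ⟨w, rfl⟩
    rw [adj, (hexact _).2 ⟨z, rfl⟩]
    simp
  · intro h y hy
    obtain ⟨z, rfl⟩ := (hexact y).1 (hr _ fun w => by
      rw [← adj]
      exact hy _ ⟨w, rfl⟩)
    rw [← adj, h]
    simp
end

section
/- Assume the left A-module E' is injective. Then for every matrix P_1 ∈ A^{k_1×k_2}, the image of the map P_1• : (E')^{k_2} → (E')^{k_1} is closed in (E')^{k_1} for the weak topology σ((E')^{k_1}, E^{1×k_1}). -/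
/-- If the left `A`-module `E'` is injective, then for every matrix `P₁ ∈ A^{k₁×k₂}`
the image of `P₁• : (E')^{k₂} → (E')^{k₁}` is closed for the weak topology
`σ((E')^{k₁}, E^{1×k₁})`. -/
theorem image_closed_of_injective
    {𝕜 : Type} [RCLike 𝕜] {A : Type} [Ring A] [IsDomain A] [Algebra 𝕜 A]
    [IsNoetherianRing A] [IsNoetherianRing Aᵐᵒᵖ]
    {E E' : Type} [AddCommGroup E] [Module 𝕜 E] [AddCommGroup E'] [Module 𝕜 E']
    [Module A E'] [IsScalarTower 𝕜 A E'] [SMulCommClass 𝕜 A E']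
    [Module Aᵐᵒᵖ E] [IsScalarTower 𝕜 Aᵐᵒᵖ E] [SMulCommClass 𝕜 Aᵐᵒᵖ E]
    (B : E →ₗ[𝕜] E' →ₗ[𝕜] 𝕜)
    (hB₁ : ∀ x : E, (∀ x' : E', B x x' = 0) → x = 0)
    (hB₂ : ∀ x' : E', (∀ x : E, B x x' = 0) → x' = 0)
    (hsemi : ∀ a : A, @Continuous E' E' (weakTopology fun x' x => B x x')
      (weakTopology fun x' x => B x x') (fun x' => a • x'))
    (hcomp : ∀ (x : E) (a : A) (x' : E'), B (MulOpposite.op a • x) x' = B x (a • x'))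
    (hinj : Module.Injective A E') :
    ∀ (k₁ k₂ : ℕ) (P₁ : Matrix (Fin k₁) (Fin k₂) A),
      @IsClosed _ (sigmaCol B k₁) (Set.range (lmulE' (E' := E') P₁)) := by
  intro k₁ k₂ P
  have key : Set.range (lmulE' (E' := E') P) =
      ⋂ (a : Fin k₁ → A) (_ : Fintype.linearCombination A (fun i => P i) a = 0) (x : E),
        {y : Fin k₁ → E' | ∑ i, B (MulOpposite.op (a i) • x) (y i) = 0} := by
    ext y
    simp only [Set.mem_iInter, Set.mem_setOf_eq, Set.mem_range]
    have hsum : ∀ (a : Fin k₁ → A) (x : E) (y : Fin k₁ → E'),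
        ∑ i, B (MulOpposite.op (a i) • x) (y i) = B x (Fintype.linearCombination A y a) := by
      intro a x y
      simp [Fintype.linearCombination_apply, hcomp, map_sum]
    constructor
    · rintro ⟨z, rfl⟩ a ha x
      rw [hsum]
      have : Fintype.linearCombination A (lmulE' P z) a = 0 := by
        have h2 : Fintype.linearCombination A (lmulE' P z) a
            = ∑ j, (Fintype.linearCombination A (fun i => P i) a) j • z j := by
          simp only [Fintype.linearCombination_apply, lmulE', Finset.smul_sum, Finset.sum_apply,
            Pi.smul_apply, Finset.sum_smul, smul_smul, smul_eq_mul]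
          exact Finset.sum_comm
        rw [h2, ha]; simp
      rw [this, map_zero]
    · intro h
      set f := Fintype.linearCombination A (fun i => P i) with hf
      have hk : LinearMap.ker f ≤ LinearMap.ker (Fintype.linearCombination A y) := by
        intro a ha
        rw [LinearMap.mem_ker] at ha ⊢
        exact hB₂ _ fun x => by rw [← hsum]; exact h a ha x
      obtain ⟨g, hg⟩ := hinj.out ((LinearMap.ker f).liftQ f le_rfl)
        (LinearMap.ker_eq_bot.mp (Submodule.ker_liftQ_eq_bot _ _ _ le_rfl))
        ((LinearMap.ker f).liftQ (Fintype.linearCombination A y) hk)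
      refine ⟨fun j => g (Pi.single j 1), ?_⟩
      funext i
      have h3 := hg (Submodule.Quotient.mk (Pi.single i 1))
      simp only [Submodule.liftQ_apply] at h3
      rw [hf, Fintype.linearCombination_apply_single, Fintype.linearCombination_apply_single,
        one_smul, one_smul] at h3
      rw [← h3]
      simp only [lmulE', ← map_smul]
      rw [← map_sum]
      congr 1
      funext j
      simp [Finset.sum_apply, Pi.single_apply]
  rw [key]
  letI := sigmaCol (E := E) (E' := E') B k₁
  refine isClosed_iInter fun a => isClosed_iInter fun _ => isClosed_iInter fun x => ?_
  have hc : Continuous (fun (y : Fin k₁ → E') (x : Fin k₁ → E) => ∑ i, B (x i) (y i)) :=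
    continuous_induced_dom
  exact isClosed_eq ((continuous_apply (fun i => MulOpposite.op (a i) • x)).comp hc)
    continuous_const
end

section
/- Assume the dual pair (E, E') is (K) over A. If the left A-module E' is injective, then the right A-module E is flat. -/
theorem aux_bipolar {𝕜 X Y : Type} [RCLike 𝕜] [AddCommGroup X] [Module 𝕜 X]
    [AddCommGroup Y] [Module 𝕜 Y] (C : X →ₗ[𝕜] Y →ₗ[𝕜] 𝕜) (S : Submodule 𝕜 X)
    (hS : @IsClosed _ (weakTopology fun x y => C x y) (S : Set X)) (x : X)
    (hx : ∀ y, (∀ s ∈ S, C s y = 0) → C x y = 0) : x ∈ S := by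
  classical
  by_contra hxS
  have ho := hS.isOpen_compl
  obtain ⟨U, hU, hUS⟩ := ho
  have hxU : (fun y => C x y) ∈ U := by
    have : x ∈ ((S : Set X))ᶜ := hxS
    rw [← hUS] at this
    exact this
  obtain ⟨F, u, hu, hFu⟩ := isOpen_pi_iff.mp hU _ hxU
  let Φ : X →ₗ[𝕜] (F → 𝕜) := LinearMap.pi fun y => C.flip y.1
  have hΦ : Φ x ∉ S.map Φ := by
    rintro ⟨s, hs, hsx⟩
    have : s ∈ ((S : Set X))ᶜ := by
      rw [← hUS]
      apply hFu
      intro y hy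
      have h1 : C s y = C x y := congrFun hsx ⟨y, hy⟩
      show C s y ∈ u y
      rw [h1]
      exact (hu y hy).2
    exact this hs
  obtain ⟨f, hf, hle⟩ := Submodule.exists_le_ker_of_notMem hΦ
  have key : ∀ z, f (Φ z) = C z (∑ y : F, f (Pi.single y 1) • y.1) := by
    intro z
    rw [LinearMap.pi_apply_eq_sum_univ f (Φ z), map_sum]
    refine Finset.sum_congr rfl fun y _ => ?_
    rw [map_smul, smul_eq_mul, smul_eq_mul, mul_comm]
    congr 2
    ext j
    simp [Pi.single_apply, eq_comm]
  apply hf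
  rw [key]
  apply hx
  intro s hs
  rw [← key]
  exact hle (Submodule.mem_map_of_mem hs)

theorem aux_inj {A E' : Type} [Ring A] [AddCommGroup E'] [Module A E']
    (hinj : Module.Injective A E') {r q : ℕ} (Q : Matrix (Fin r) (Fin q) A) (y : Fin r → E')
    (h : ∀ v : Fin r → A, (∀ i, ∑ j, v j * Q j i = 0) → ∑ j, v j • y j = 0) :
    ∃ x' : Fin q → E', lmulE' Q x' = y := by
  let f : (Fin r → A) →ₗ[A] (Fin q → A) := Fintype.linearCombination A Q
  let g : (Fin r → A) →ₗ[A] E' := Fintype.linearCombination A y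
  have hfg : LinearMap.ker f ≤ LinearMap.ker g := by
    intro v hv
    apply h v
    intro i
    have := congrFun (show f v = 0 from hv) i
    have h2 : f v i = ∑ j, v j * Q j i := by
      change (∑ j, v j • Q j) i = _
      rw [Finset.sum_apply]
      rfl
    rw [← h2]
    exact this
  let g' := ((LinearMap.ker f).liftQ g hfg) ∘ₗ f.quotKerEquivRange.symm.toLinearMap
  obtain ⟨G, hG⟩ := hinj.out (LinearMap.range f).subtype (Submodule.injective_subtype _) g'
  have hGf : ∀ v, G (f v) = g v := by
    intro v
    have h1 := hG ⟨f v, LinearMap.mem_range_self f v⟩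
    have h2 : f.quotKerEquivRange.symm ⟨f v, LinearMap.mem_range_self f v⟩
        = (LinearMap.ker f).mkQ v := by
      rw [LinearEquiv.symm_apply_eq]; rfl
    simp only [g', LinearMap.comp_apply, LinearEquiv.coe_coe, h2] at h1
    exact h1
  refine ⟨fun i => G (Pi.single i 1), ?_⟩
  ext j
  have h1 := hGf (Pi.single j 1)
  have h2 : f (Pi.single j 1) = Q j :=
    (Fintype.linearCombination_apply_single A _ j (1 : A)).trans (one_smul A (Q j))
  have h3 : g (Pi.single j 1) = y j :=
    (Fintype.linearCombination_apply_single A y j (1 : A)).trans (one_smul A (y j))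
  rw [h2, h3] at h1
  rw [← h1, LinearMap.pi_apply_eq_sum_univ G (Q j)]
  refine Finset.sum_congr rfl fun i _ => ?_
  have h4 : (Pi.single i 1 : Fin q → A) = fun k => if i = k then 1 else 0 := by
    ext k
    simp [Pi.single_apply, eq_comm]
  exact congrArg (fun w => Q j i • G w) h4

/-- If the dual pair `(E, E')` is `(K)` (Köthe) over `A` and the left `A`-module `E'`
is injective, then the right `A`-module `E` is flat. -/
theorem flat_of_injective_of_kothe
    {𝕜 : Type} [RCLike 𝕜] {A : Type} [Ring A] [IsDomain A] [Algebra 𝕜 A]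
    [IsNoetherianRing A] [IsNoetherianRing Aᵐᵒᵖ]
    {E E' : Type} [AddCommGroup E] [Module 𝕜 E] [AddCommGroup E'] [Module 𝕜 E']
    [Module A E'] [IsScalarTower 𝕜 A E'] [SMulCommClass 𝕜 A E']
    [Module Aᵐᵒᵖ E] [IsScalarTower 𝕜 Aᵐᵒᵖ E] [SMulCommClass 𝕜 Aᵐᵒᵖ E]
    (B : E →ₗ[𝕜] E' →ₗ[𝕜] 𝕜)
    (hB₁ : ∀ x : E, (∀ x' : E', B x x' = 0) → x = 0)
    (hB₂ : ∀ x' : E', (∀ x : E, B x x' = 0) → x' = 0)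
    (hsemi : ∀ a : A, @Continuous E' E' (weakTopology fun x' x => B x x')
      (weakTopology fun x' x => B x x') (fun x' => a • x'))
    (hcomp : ∀ (x : E) (a : A) (x' : E'), B (MulOpposite.op a • x) x' = B x (a • x'))
    (hK : ∀ (q r : ℕ), 0 < q → 0 < r → ∀ P : Matrix (Fin q) (Fin r) A,
      @IsClosed _ (sigmaRow B r) (Set.range (rmulE (E := E) P)) ↔
      @IsClosed _ (sigmaCol B q) (Set.range (lmulE' (E' := E') P)))
    (hinj : Module.Injective A E') :
    RightFlat A E := by
  intro q a x hxa
  rcases Nat.eq_zero_or_pos q with rfl | hq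
  · exact ⟨0, Fin.elim0, fun j => j.elim0, fun j => j.elim0, fun i => i.elim0⟩
  let K : Submodule A (Fin q → A) := LinearMap.ker (Fintype.linearCombination A a)
  have hKfg : K.FG := IsNoetherian.noetherian K
  obtain ⟨n, Q₀, hQ₀⟩ := Submodule.fg_iff_exists_fin_generating_family.mp hKfg
  let Q : Matrix (Fin (n + 1)) (Fin q) A := Fin.cons 0 Q₀
  have hQspan : Submodule.span A (Set.range Q) = K := by
    rw [show Set.range Q = insert 0 (Set.range Q₀) from Fin.range_cons _ _,
      Submodule.span_insert_zero, hQ₀]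
  have hQa : ∀ j, ∑ i, Q j i * a i = 0 := by
    intro j
    have : Q j ∈ K := hQspan ▸ Submodule.subset_span (Set.mem_range_self j)
    exact this
  have htr : ∀ (r q : ℕ) (Q : Matrix (Fin r) (Fin q) A) (z : Fin r → E) (x' : Fin q → E'),
      ∑ i, B (rmulE Q z i) (x' i) = ∑ j, B (z j) (lmulE' Q x' j) := by
    intro r q Q z x'
    simp only [rmulE, lmulE', map_sum, LinearMap.sum_apply, hcomp]
    exact Finset.sum_comm
  have hcl : @IsClosed _ (sigmaCol B (n + 1)) (Set.range (lmulE' (E' := E') Q)) := by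
    have hset : Set.range (lmulE' (E' := E') Q) =
        ⋂ (v : Fin (n + 1) → A) (_ : ∀ i, ∑ j, v j * Q j i = 0) (z : E),
          {y | ∑ j, B (MulOpposite.op (v j) • z) (y j) = 0} := by
      ext y
      simp only [Set.mem_iInter, Set.mem_setOf_eq, hcomp]
      constructor
      · rintro ⟨x', rfl⟩ v hv z
        rw [← map_sum]
        simp only [lmulE', Finset.smul_sum, smul_smul]
        rw [Finset.sum_comm]
        simp only [← Finset.sum_smul, hv]
        simp
      · intro h
        apply aux_inj hinj
        intro v hv
        apply hB₂
        intro z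
        rw [map_sum]
        exact h v hv z
    rw [hset]
    letI := sigmaCol (E := E) (E' := E') B (n + 1)
    refine isClosed_iInter fun v => isClosed_iInter fun _ => isClosed_iInter fun z => ?_
    have hc : Continuous fun y : Fin (n + 1) → E' =>
        ∑ j, B (MulOpposite.op (v j) • z) (y j) :=
      (continuous_apply (fun j => MulOpposite.op (v j) • z)).comp
        (continuous_induced_dom (f := fun (x' : Fin (n + 1) → E') (x : Fin (n + 1) → E) =>
          ∑ i, B (x i) (x' i)))
    exact isClosed_eq hc continuous_const
  have hcl2 := (hK (n + 1) q n.succ_pos hq Q).mpr hcl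
  let C : (Fin q → E) →ₗ[𝕜] (Fin q → E') →ₗ[𝕜] 𝕜 :=
    ∑ i, (B.compl₁₂ (LinearMap.proj i) (LinearMap.proj i))
  have hC : ∀ z x', C z x' = ∑ i, B (z i) (x' i) := by
    intro z x'
    simp [C, LinearMap.sum_apply]
  let S : Submodule 𝕜 (Fin q → E) := LinearMap.range
    ({ toFun := rmulE (E := E) Q
       map_add' := by
        intro u v
        ext i
        simp [rmulE, Finset.sum_add_distrib]
       map_smul' := by
        intro c v
        ext i
        simp only [rmulE, Pi.smul_apply, Finset.smul_sum, RingHom.id_apply]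
        exact Finset.sum_congr rfl fun j _ => (smul_comm _ _ _).symm } :
      (Fin (n + 1) → E) →ₗ[𝕜] (Fin q → E))
  have hxS : x ∈ S := by
    apply aux_bipolar C S
    · have : (fun (x : Fin q → E) (y : Fin q → E') => C x y) =
          fun (x : Fin q → E) (y : Fin q → E') => ∑ i, B (x i) (y i) := by
        ext z x'
        exact hC z x'
      rw [this]
      exact hcl2
    · intro x' hx'
      have hker : lmulE' Q x' = 0 := by
        ext j
        apply hB₂
        intro z
        have h1 := hx' (rmulE Q (Pi.single j z)) ⟨_, rfl⟩
        rw [hC, htr, Finset.sum_eq_single j] at h1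
        · simpa using h1
        · intro b _ hb
          simp [hb]
        · simp
      obtain ⟨e, he⟩ := aux_inj (q := 1) hinj (Matrix.of fun i _ => a i) x' (by
        intro v hv
        have hvK : v ∈ K := hv 0
        rw [← hQspan] at hvK
        have hle : Submodule.span A (Set.range Q) ≤
            LinearMap.ker (Fintype.linearCombination A x') := by
          rw [Submodule.span_le]
          rintro _ ⟨j, rfl⟩
          exact congrFun hker j
        exact hle hvK)
      rw [hC, ← he, ← htr]
      have : rmulE (Matrix.of fun i (_ : Fin 1) => a i) x = 0 := by
        ext j
        exact hxa
      simp [this]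
  obtain ⟨y, hy⟩ := hxS
  exact ⟨n + 1, y, Q, hQa, fun i => (congrFun hy i).symm⟩
end
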